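/- arXiv:1811.05165 — 2 statements merged into one kernel-verified Lean document; each statement's English description precedes it below -/
import Mathlib

section
/- Let α > 0, T > 0, a ∈ ℝ, and let h : [0,T] → ℝ be continuous. Define the single layer heat potential ũ(x,t) = (1/α)·∫_0^t U*(x−a, t−s) h(s) ds. Then for every t ∈ (0,T] and every x > a, ũ(·,t) is differentiable in x with ∂ũ/∂x(x,t) = (1/α)·∫_0^t (∂U*/∂z)(x−a, t−s) h(s) ds = −(1/α)·∫_0^t (α(x−a)/(2(t−s)))·U*(x−a, t−s) h(s) ds, and the interior conormal derivative satisfies the jump relation lim_{x→a⁺} ( −∂ũ/∂x(x,t) ) = (1/2)·h(t). -/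
/-!
For `z > 0` the kernel `τ ↦ (z / τ) U*(z, τ) = -(2 / α) ∂_z U*(z, τ)` is a probability density on
`(0, ∞)`: the substitution `τ = y⁻²` turns it into a Gaussian. It is self-similar under
`τ ↦ z² τ`, so as `z → 0⁺` its mass concentrates at `τ = 0⁺`. Up to the factor `1 / 2`, the
interior conormal derivative of the potential is the average of `s ↦ h s` against this density
taken at `τ = t - s`, so it tends to half the left limit of `h` at `t`.
-/

open MeasureTheory Real Filter intervalIntegral Topology

/-- The fundamental solution of the one-dimensional heat equation with heat
capacity constant `α`: `U*(z,τ) = (α/(4πτ))^{1/2} · exp(−α z²/(4τ))` for `τ > 0`,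
and `U*(z,τ) = 0` otherwise. -/
noncomputable def Ustar (α z τ : ℝ) : ℝ :=
  if 0 < τ then Real.sqrt (α / (4 * Real.pi * τ)) * Real.exp (-(α * z ^ 2) / (4 * τ)) else 0

lemma sqrt_le_exp_half (v : ℝ) : √v ≤ exp (v / 2) := by
  rw [sqrt_le_left (exp_pos _).le, ← exp_nat_mul]
  calc v ≤ exp v := by linarith [add_one_le_exp v]
    _ = exp ((2 : ℕ) * (v / 2)) := by push_cast; ring_nf

lemma one_le_sqrt_pi : 1 ≤ √π :=
  one_le_sqrt.2 (by linarith [pi_gt_three])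

variable {E : Type*} [NormedAddCommGroup E] [NormedSpace ℝ E] {α z τ t : ℝ}

lemma Ustar_of_pos (hτ : 0 < τ) :
    Ustar α z τ = √(α / (4 * π * τ)) * exp (-(α * z ^ 2) / (4 * τ)) :=
  if_pos hτ

lemma Ustar_of_nonpos (hτ : τ ≤ 0) : Ustar α z τ = 0 :=
  if_neg hτ.not_gt

lemma Ustar_nonneg : 0 ≤ Ustar α z τ := by
  unfold Ustar
  split_ifs <;> positivity

lemma measurable_Ustar : Measurable (Ustar α z) :=
  Measurable.ite (measurableSet_lt measurable_const measurable_id) (by fun_prop) measurable_const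

/-- The density `(z / τ) U*(z, τ)` in `τ` of the time at which a Brownian motion with heat kernel
`U*` first reaches the level `z > 0`. It is the kernel of the normal derivative of the single layer
potential, normalised to have mass one. -/
noncomputable def firstPassageDensity (α z τ : ℝ) : ℝ :=
  z / τ * Ustar α z τ

lemma hasDerivAt_Ustar : HasDerivAt (Ustar α · τ) (-(α / 2) * firstPassageDensity α z τ) z := by
  unfold firstPassageDensity
  rcases le_or_gt τ 0 with hτ | hτ
  · simpa only [Ustar_of_nonpos hτ, mul_zero] using hasDerivAt_const z (0 : ℝ)
  · simp only [Ustar_of_pos hτ]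
    have hexponent : HasDerivAt (fun z : ℝ => -(α * z ^ 2) / (4 * τ))
        (-(α * (2 * z)) / (4 * τ)) z := by
      simpa using ((hasDerivAt_pow 2 z).const_mul α).neg.div_const (4 * τ)
    refine (hexponent.exp.const_mul √(α / (4 * π * τ))).congr_deriv ?_
    field_simp
    ring

lemma Ustar_eq_sqrt_mul_exp (hz : 0 < z) (hτ : 0 < τ) :
    Ustar α z τ =
      √(α * z ^ 2 / (4 * τ)) * exp (-(α * z ^ 2 / (4 * τ))) / (√π * z) := by
  have hsqrt : √(α * z ^ 2 / (4 * τ)) = √(α / (4 * π * τ)) * (√π * z) := by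
    rw [← sqrt_sq (by positivity : 0 ≤ √π * z), mul_pow, sq_sqrt pi_pos.le,
      ← sqrt_mul' _ (by positivity)]
    congr 1
    field_simp
  rw [Ustar_of_pos hτ, hsqrt, neg_div]
  field_simp

lemma Ustar_le_inv (hα : 0 ≤ α) (hz : 0 < z) : Ustar α z τ ≤ z⁻¹ := by
  rcases le_or_gt τ 0 with hτ | hτ
  · rw [Ustar_of_nonpos hτ]
    positivity
  set v := α * z ^ 2 / (4 * τ)
  have hv0 : 0 ≤ v := by positivity
  calc Ustar α z τ = √v * exp (-v) / (√π * z) := Ustar_eq_sqrt_mul_exp hz hτ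
    _ ≤ exp v * exp (-v) / (1 * z) := by
        gcongr
        · exact (sqrt_le_exp_half v).trans (exp_le_exp.2 (by linarith))
        · exact one_le_sqrt_pi
    _ = z⁻¹ := by rw [← exp_add, add_neg_cancel, exp_zero, one_mul, one_div]

lemma firstPassageDensity_nonneg (hz : 0 ≤ z) : 0 ≤ firstPassageDensity α z τ := by
  rcases le_or_gt τ 0 with hτ | hτ
  · rw [firstPassageDensity, Ustar_of_nonpos hτ, mul_zero]
  · exact mul_nonneg (by positivity) Ustar_nonneg

lemma measurable_firstPassageDensity : Measurable (firstPassageDensity α z) :=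
  (measurable_const.div measurable_id).mul measurable_Ustar

lemma firstPassageDensity_le (hα : 0 < α) (hz : 0 < z) :
    firstPassageDensity α z τ ≤ 8 / (α * z ^ 2) := by
  unfold firstPassageDensity
  rcases le_or_gt τ 0 with hτ | hτ
  · rw [Ustar_of_nonpos hτ, mul_zero]
    positivity
  set v := α * z ^ 2 / (4 * τ) with hv
  have hv_le : v ≤ 2 * exp (v / 2) := by linarith [add_one_le_exp (v / 2)]
  calc z / τ * Ustar α z τ = 4 / (α * z ^ 2) * (v * √v * exp (-v) / √π) := by
        rw [Ustar_eq_sqrt_mul_exp hz hτ, ← hv, show z / τ = 4 / (α * z) * v by rw [hv]; field_simp]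
        field_simp
    _ ≤ 4 / (α * z ^ 2) * (2 * exp (v / 2) * exp (v / 2) * exp (-v) / 1) := by
        gcongr
        · exact sqrt_le_exp_half v
        · exact one_le_sqrt_pi
    _ = 8 / (α * z ^ 2) := by
        rw [mul_assoc 2, ← exp_add, add_halves, mul_assoc 2, ← exp_add, add_neg_cancel, exp_zero]
        ring

lemma firstPassageDensity_le_of_le {ε : ℝ} (hα : 0 ≤ α) (hz : 0 ≤ z) (hε : 0 < ε) (hετ : ε ≤ τ) :
    firstPassageDensity α z τ ≤ z / ε * √(α / (4 * π * ε)) := by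
  have hτ : 0 < τ := hε.trans_le hετ
  rw [firstPassageDensity, Ustar_of_pos hτ]
  gcongr
  refine (mul_le_of_le_one_right (sqrt_nonneg _) (exp_le_one_iff.2 ?_)).trans (by gcongr)
  rw [neg_div, neg_nonpos]
  positivity

lemma firstPassageDensity_sq_mul (hz : 0 < z) :
    z ^ 2 * firstPassageDensity α z (z ^ 2 * τ) = firstPassageDensity α 1 τ := by
  unfold firstPassageDensity
  rcases le_or_gt τ 0 with hτ | hτ
  · rw [Ustar_of_nonpos hτ, Ustar_of_nonpos (mul_nonpos_of_nonneg_of_nonpos (sq_nonneg z) hτ)]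
    simp only [mul_zero]
  · rw [Ustar_eq_sqrt_mul_exp hz (by positivity), Ustar_eq_sqrt_mul_exp one_pos hτ,
      show α * z ^ 2 / (4 * (z ^ 2 * τ)) = α * 1 ^ 2 / (4 * τ) by field_simp]
    field_simp

-- The left-hand side is the integrand that `integral_comp_rpow_Ioi` produces for `τ = y⁻²`.
lemma firstPassageDensity_one_rpow_neg_two {y : ℝ} (hy : 0 < y) :
    (|(-2 : ℝ)| * y ^ ((-2 : ℝ) - 1)) * firstPassageDensity α 1 (y ^ (-2 : ℝ)) =
      √(α / π) * exp (-(α / 4) * y ^ 2) := by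
  have hcube : y ^ ((-2 : ℝ) - 1) = (y ^ 3)⁻¹ := by
    rw [show (-2 : ℝ) - 1 = -(3 : ℕ) by norm_num, rpow_neg hy.le, rpow_natCast]
  have hsquare : y ^ (-2 : ℝ) = (y ^ 2)⁻¹ := by
    rw [show (-2 : ℝ) = -(2 : ℕ) by norm_num, rpow_neg hy.le, rpow_natCast]
  have hsqrt : √(α / (4 * π * (y ^ 2)⁻¹)) = √(α / π) * (y / 2) := by
    rw [← sqrt_sq (by positivity : 0 ≤ y / 2), ← sqrt_mul' _ (by positivity)]
    congr 1
    field_simp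
    ring
  rw [hcube, hsquare, firstPassageDensity, Ustar_of_pos (by positivity), hsqrt,
    show -(α * 1 ^ 2) / (4 * (y ^ 2)⁻¹) = -(α / 4) * y ^ 2 by field_simp,
    abs_neg, abs_two]
  field_simp

lemma integral_Ioi_firstPassageDensity_one (hα : 0 < α) :
    ∫ τ in Set.Ioi 0, firstPassageDensity α 1 τ = 1 := by
  calc ∫ τ in Set.Ioi 0, firstPassageDensity α 1 τ
      = ∫ y in Set.Ioi (0 : ℝ), √(α / π) * exp (-(α / 4) * y ^ 2) := by
        rw [← integral_comp_rpow_Ioi _ (by norm_num : (-2 : ℝ) ≠ 0)]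
        exact setIntegral_congr_fun measurableSet_Ioi fun y hy =>
          firstPassageDensity_one_rpow_neg_two hy
    _ = √(α / π) * (√(π / (α / 4)) / 2) := by
        rw [MeasureTheory.integral_const_mul, integral_gaussian_Ioi]
    _ = √(α / π * (π / (α / 4))) / 2 := by
        rw [sqrt_mul (by positivity), mul_div_assoc]
    _ = 1 := by
        rw [show α / π * (π / (α / 4)) = 2 ^ 2 by field_simp; norm_num, sqrt_sq (by norm_num)]
        norm_num

lemma tendsto_integral_firstPassageDensity (hα : 0 < α) (ht : 0 < t) :
    Tendsto (fun z => ∫ τ in 0..t, firstPassageDensity α z τ) (𝓝[>] 0) (𝓝 1) := by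
  have hintegrable : IntegrableOn (firstPassageDensity α 1) (Set.Ioi 0) :=
    .of_integral_ne_zero <| by simp [integral_Ioi_firstPassageDensity_one hα]
  have hratio : Tendsto (fun z : ℝ => t / z ^ 2) (𝓝[>] 0) atTop := by
    have hinv := (tendsto_pow_atTop two_ne_zero).comp (tendsto_inv_nhdsGT_zero (𝕜 := ℝ))
    simpa [Function.comp_def, div_eq_mul_inv] using hinv.const_mul_atTop ht
  have hmass := intervalIntegral_tendsto_integral_Ioi 0 hintegrable hratio
  rw [integral_Ioi_firstPassageDensity_one hα] at hmass
  refine hmass.congr' ?_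
  filter_upwards [self_mem_nhdsWithin] with z hz
  have hz : 0 < z := hz
  calc ∫ τ in 0..t / z ^ 2, firstPassageDensity α 1 τ
      = z ^ 2 * ∫ τ in 0..t / z ^ 2, firstPassageDensity α z (z ^ 2 * τ) := by
        simp only [← firstPassageDensity_sq_mul hz, intervalIntegral.integral_const_mul]
    _ = ∫ τ in z ^ 2 * 0..z ^ 2 * (t / z ^ 2), firstPassageDensity α z τ :=
        intervalIntegral.mul_integral_comp_mul_left _
    _ = ∫ τ in 0..t, firstPassageDensity α z τ := by
        rw [mul_zero, mul_div_cancel₀ _ (by positivity)]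

lemma tendstoUniformlyOn_firstPassageDensity {ε : ℝ} (hα : 0 ≤ α) (hε : 0 < ε) :
    TendstoUniformlyOn (firstPassageDensity α) 0 (𝓝[>] 0) (Set.Ici ε) := by
  have hbound : Tendsto (fun z => z / ε * √(α / (4 * π * ε))) (𝓝[>] 0) (𝓝 0) :=
    (Continuous.tendsto' (by fun_prop) _ _ (by simp)).mono_left nhdsWithin_le_nhds
  rw [Metric.tendstoUniformlyOn_iff]
  intro δ hδ
  filter_upwards [self_mem_nhdsWithin, hbound.eventually_lt_const hδ] with z hz hzδ τ hτ
  rw [Pi.zero_apply, dist_zero_left, norm_of_nonneg (firstPassageDensity_nonneg (le_of_lt hz))]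
  exact (firstPassageDensity_le_of_le hα (le_of_lt hz) hε hτ).trans_lt hzδ

lemma tendsto_integral_firstPassageDensity_smul [CompleteSpace E] {g : ℝ → E} {l : E}
    (hα : 0 < α) (ht : 0 < t) (hg : IntervalIntegrable g volume 0 t)
    (hgl : Tendsto g (𝓝[>] 0) (𝓝 l)) :
    Tendsto (fun z => ∫ τ in 0..t, firstPassageDensity α z τ • g τ) (𝓝[>] 0) (𝓝 l) := by
  have hmass := tendsto_integral_firstPassageDensity hα ht
  simp only [intervalIntegral.integral_of_le ht.le] at hmass ⊢
  refine tendsto_setIntegral_peak_smul_of_integrableOn_of_tendsto measurableSet_Ioc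
    measurableSet_Ioc subset_rfl self_mem_nhdsWithin measure_Ioc_lt_top.ne ?_ ?_ hmass
    (.of_forall fun z => measurable_firstPassageDensity.aestronglyMeasurable)
    ((intervalIntegrable_iff_integrableOn_Ioc_of_le ht.le).1 hg)
    (hgl.mono_left (nhdsWithin_mono _ Set.Ioc_subset_Ioi_self))
  · filter_upwards [self_mem_nhdsWithin] with z hz τ _
    exact firstPassageDensity_nonneg (le_of_lt hz)
  · intro u hu h0u
    obtain ⟨ε, hε, hball⟩ := Metric.isOpen_iff.1 hu 0 h0u
    refine (tendstoUniformlyOn_firstPassageDensity hα.le hε).mono fun τ hτ => ?_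
    by_contra hlt
    refine hτ.2 (hball ?_)
    rw [mem_ball_zero_iff, norm_of_nonneg hτ.1.1.le]
    exact not_le.1 hlt

lemma tendsto_integral_firstPassageDensity_sub_smul [CompleteSpace E] {h : ℝ → E} {l : E}
    (hα : 0 < α) (ht : 0 < t) (hh : IntervalIntegrable h volume 0 t)
    (hl : Tendsto h (𝓝[<] t) (𝓝 l)) :
    Tendsto (fun z => ∫ s in 0..t, firstPassageDensity α z (t - s) • h s) (𝓝[>] 0) (𝓝 l) := by
  have hreflect : Tendsto (t - ·) (𝓝[>] 0) (𝓝[<] t) := by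
    have hmaps : Set.MapsTo (t - ·) (Set.Ioi 0) (Set.Iio t) := fun τ hτ => sub_lt_self t hτ
    simpa only [sub_zero] using
      (continuous_sub_left t).continuousWithinAt.tendsto_nhdsWithin (x := 0) hmaps
  have hint : IntervalIntegrable (fun τ => h (t - τ)) volume 0 t := by
    simpa only [sub_zero, sub_self] using (hh.comp_sub_left t).symm
  refine (tendsto_integral_firstPassageDensity_smul hα ht hint (hl.comp hreflect)).congr fun z => ?_
  simpa only [sub_sub_cancel, sub_self, sub_zero] using intervalIntegral.integral_comp_sub_left
    (a := 0) (b := t) (fun s => firstPassageDensity α z (t - s) • h s) t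

lemma hasDerivAt_integral_Ustar_smul {b c : ℝ} {h : ℝ → E} (hα : 0 < α) (hz : 0 < z)
    (hh : IntervalIntegrable h volume b c) :
    HasDerivAt (fun z => ∫ s in b..c, Ustar α z (t - s) • h s)
      (-(α / 2) • ∫ s in b..c, firstPassageDensity α z (t - s) • h s) z := by
  have hmeas := hh.aestronglyMeasurable_restrict_uIoc
  have hU (z : ℝ) : Measurable fun s => Ustar α z (t - s) :=
    measurable_Ustar.comp (measurable_const.sub measurable_id)
  have hP : Measurable fun s => firstPassageDensity α z (t - s) :=
    measurable_firstPassageDensity.comp (measurable_const.sub measurable_id)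
  have hUh : IntervalIntegrable (fun s => Ustar α z (t - s) • h s) volume b c := by
    rw [intervalIntegrable_iff] at hh ⊢
    refine hh.bdd_smul z⁻¹ (hU z).aestronglyMeasurable (.of_forall fun s => ?_)
    rw [norm_of_nonneg Ustar_nonneg]
    exact Ustar_le_inv hα.le hz
  have hbound (w : ℝ) (hw : w ∈ Set.Ioi (z / 2)) (s : ℝ) :
      ‖(-(α / 2) * firstPassageDensity α w (t - s)) • h s‖ ≤ 4 / (z / 2) ^ 2 * ‖h s‖ := by
    have hw : z / 2 < w := hw
    have hw0 : 0 < w := (half_pos hz).trans hw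
    rw [norm_smul, neg_mul, norm_neg,
      norm_of_nonneg (mul_nonneg (by positivity) (firstPassageDensity_nonneg hw0.le))]
    gcongr
    calc α / 2 * firstPassageDensity α w (t - s) ≤ α / 2 * (8 / (α * w ^ 2)) := by
          gcongr
          exact firstPassageDensity_le hα hw0
      _ = 4 / w ^ 2 := by field_simp; norm_num
      _ ≤ 4 / (z / 2) ^ 2 := by gcongr
  have hderiv := (intervalIntegral.hasDerivAt_integral_of_dominated_loc_of_deriv_le
    (F := fun w s => Ustar α w (t - s) • h s) (Ioi_mem_nhds (half_lt_self hz))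
    (.of_forall fun w => (hU w).aestronglyMeasurable.smul hmeas) hUh
    ((hP.const_mul _).aestronglyMeasurable.smul hmeas)
    (.of_forall fun s _ w hw => hbound w hw s) (hh.norm.const_mul _)
    (.of_forall fun s _ w _ => hasDerivAt_Ustar.smul_const (h s))).2
  simpa only [mul_smul, intervalIntegral.integral_smul] using hderiv

lemma hasDerivAt_singleLayerPotential {a x : ℝ} {h : ℝ → E} (hα : 0 < α) (hx : a < x)
    (hh : IntervalIntegrable h volume 0 t) :
    HasDerivAt (fun x' => (1 / α) • ∫ s in (0 : ℝ)..t, Ustar α (x' - a) (t - s) • h s)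
      (-(1 / 2 : ℝ) • ∫ s in (0 : ℝ)..t, firstPassageDensity α (x - a) (t - s) • h s) x := by
  have hderiv := (hasDerivAt_integral_Ustar_smul (t := t) hα (sub_pos.2 hx) hh).comp_sub_const x a
  refine (hderiv.const_smul (1 / α)).congr_deriv ?_
  rw [smul_smul]
  congr 1
  field_simp

theorem single_layer_potential_conormal_jump_relation_general [CompleteSpace E] {a : ℝ}
    {h : ℝ → E} {l : E} (hα : 0 < α) (ht : 0 < t)
    (hh : IntervalIntegrable h volume 0 t) (hl : Tendsto h (𝓝[<] t) (𝓝 l)) :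
    (∀ x : ℝ, a < x →
      HasDerivAt (fun x' => (1 / α) • ∫ s in (0:ℝ)..t, Ustar α (x' - a) (t - s) • h s)
        (-(1 / α) •
          ∫ s in (0:ℝ)..t, ((α * (x - a) / (2 * (t - s))) * Ustar α (x - a) (t - s)) • h s) x) ∧
    Tendsto (fun x =>
        -(deriv (fun x' => (1 / α) • ∫ s in (0:ℝ)..t, Ustar α (x' - a) (t - s) • h s) x))
      (𝓝[>] a) (𝓝 ((1 / 2 : ℝ) • l)) := by
  have hderiv (x : ℝ) (hx : a < x) := hasDerivAt_singleLayerPotential hα hx hh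
  refine ⟨fun x hx => (hderiv x hx).congr_deriv ?_, ?_⟩
  · have hkernel (s : ℝ) : α * (x - a) / (2 * (t - s)) * Ustar α (x - a) (t - s) =
        α / 2 * firstPassageDensity α (x - a) (t - s) := by
      rw [firstPassageDensity, mul_div_mul_comm, mul_assoc]
    simp only [hkernel, mul_smul, intervalIntegral.integral_smul]
    rw [smul_smul]
    congr 1
    field_simp
  · have hlimit : Tendsto (fun z => ∫ s in (0:ℝ)..t, firstPassageDensity α z (t - s) • h s)
        (𝓝[>] 0) (𝓝 l) := tendsto_integral_firstPassageDensity_sub_smul hα ht hh hl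
    have hshift : Tendsto (· - a) (𝓝[>] a) (𝓝[>] 0) := by
      have hmaps : Set.MapsTo (· - a) (Set.Ioi a) (Set.Ioi 0) := fun x hx =>
        sub_pos.2 (Set.mem_Ioi.1 hx)
      simpa only [sub_self] using
        (continuous_sub_right a).continuousWithinAt.tendsto_nhdsWithin (x := a) hmaps
    refine ((hlimit.comp hshift).const_smul (1 / 2 : ℝ)).congr' ?_
    filter_upwards [self_mem_nhdsWithin] with x hx
    rw [(hderiv x hx).deriv, neg_smul, neg_neg, Function.comp_apply]

/-- For continuous `h`, every `t ∈ (0,T]` and every `x > a`, the single layer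
heat potential `ũ(x,t) = (1/α)·∫_0^t U*(x−a, t−s) h(s) ds` is differentiable
in `x` with
`∂_x ũ(x,t) = −(1/α)·∫_0^t (α(x−a)/(2(t−s)))·U*(x−a, t−s) h(s) ds`,
and the interior conormal derivative satisfies the jump relation
`lim_{x→a⁺} (−∂_x ũ(x,t)) = (1/2)·h(t)`. -/
theorem single_layer_potential_conormal_jump_relation (α T a : ℝ) (hα : 0 < α) (hT : 0 < T)
    (h : ℝ → ℝ) (hh : ContinuousOn h (Set.Icc 0 T))
    (t : ℝ) (ht : 0 < t) (htT : t ≤ T) :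
    (∀ x : ℝ, a < x →
      HasDerivAt (fun x' => (1 / α) * ∫ s in (0:ℝ)..t, Ustar α (x' - a) (t - s) * h s)
        (-(1 / α) *
          ∫ s in (0:ℝ)..t, (α * (x - a) / (2 * (t - s))) * Ustar α (x - a) (t - s) * h s) x) ∧
    Tendsto (fun x =>
        -(deriv (fun x' => (1 / α) * ∫ s in (0:ℝ)..t, Ustar α (x' - a) (t - s) * h s) x))
      (𝓝[>] a) (𝓝 ((1 / 2) * h t)) := by
  have hsub : Set.Icc 0 t ⊆ Set.Icc 0 T := Set.Icc_subset_Icc_right htT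
  have hleft : Tendsto h (𝓝[<] t) (𝓝 (h t)) := by
    rw [← nhdsWithin_Ioo_eq_nhdsLT ht]
    exact (hh t ⟨ht.le, htT⟩).mono_left (nhdsWithin_mono t (Set.Ioo_subset_Icc_self.trans hsub))
  exact single_layer_potential_conormal_jump_relation_general hα ht
    ((hh.mono hsub).intervalIntegrable_of_Icc ht.le) hleft
end

section
/- Under the hypotheses of the abstract operator-preconditioning theorem — X, Y real normed spaces; a symmetric bilinear on X with c₁^A·‖v‖² ≤ a(v,v) ≤, in absolute value, c₂^A·‖u‖·‖v‖; b symmetric bilinear on Y with c₁^B·‖w‖² ≤ b(w,w) and |b(u,w)| ≤ c₂^B·‖u‖·‖w‖; d : X × Y → ℝ bilinear with |d(v,w)| ≤ c₂^M·‖v‖·‖w‖; linearly independent φ₁,…,φ_N ∈ X and ψ₁,…,ψ_N ∈ Y; discrete inf-sup constant c₁^M > 0 for d on span{φ_k} × span{ψ_i}; matrices A[ℓ,k] = a(φ_k,φ_ℓ), B[ℓ,k] = b(ψ_k,ψ_ℓ), M[ℓ,k] = d(φ_k,ψ_ℓ) — every (real) eigenvalue λ of the preconditioned matrix (M⁻¹BM⁻ᵀ)·A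 satisfies c₁^A·c₁^B/(c₂^M)² ≤ λ ≤ c₂^A·c₂^B/(c₁^M)², all eigenvalues are real and positive, and hence the spectral condition number satisfies κ((M⁻¹BM⁻ᵀ)·A) = λ_max/λ_min ≤ (c₂^A·c₂^B·(c₂^M)²)/(c₁^A·c₁^B·(c₁^M)²). -/
open Matrix

/-!
Put `S = Mᵀ B⁻¹ M`, the inverse of the preconditioner. For `u = ∑ xₖ φₖ`, the number `x ⬝ S x` is
the energy `b(w, w)` of the discrete Riesz representative `w` of `d(u, ·)` in `span ψ`. Boundedness
of `d` bounds this energy above by a multiple of `‖u‖²`, and the inf-sup condition bounds it below,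
while `x ⬝ A x = a(u, u)` is comparable to `‖u‖²` as well. An eigenpair of the preconditioned matrix
satisfies `A x = λ S x`, so `λ` is the quotient of these two quadratic forms. Complex eigenvalues
are real and positive because the preconditioned matrix is a product of two positive definite ones.
-/

section PositiveDefinite

variable {ι 𝕜 : Type*} [RCLike 𝕜]

open scoped ComplexOrder

theorem posDef_mul_mul_transpose [Fintype ι] [DecidableEq ι] {B U : Matrix ι ι ℝ} (hB : B.PosDef)
    (hU : IsUnit U) : (U * B * Uᵀ).PosDef := by
  simpa only [star_eq_conjTranspose, conjTranspose_eq_transpose_of_trivial] using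
    hU.posDef_star_right_conjugate_iff.mpr hB

theorem posDef_map_ofReal [Finite ι] {A : Matrix ι ι ℝ} (hA : A.PosDef) :
    (A.map (RCLike.ofReal : ℝ → 𝕜)).PosDef := by
  have hherm : (A.map (RCLike.ofReal : ℝ → 𝕜)).IsHermitian :=
    hA.isHermitian.map _ fun r => by simp
  cases nonempty_fintype ι
  refine .of_dotProduct_mulVec_pos hherm fun x hx => RCLike.pos_iff.mpr
    ⟨?_, hherm.im_star_dotProduct_mulVec_self x⟩
  set p : ι → ℝ := fun i => RCLike.re (x i) with hp
  set q : ι → ℝ := fun i => RCLike.im (x i) with hq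
  have hre : RCLike.re (star x ⬝ᵥ (A.map (RCLike.ofReal : ℝ → 𝕜) *ᵥ x)) =
      p ⬝ᵥ (A *ᵥ p) + q ⬝ᵥ (A *ᵥ q) := by
    simp [dotProduct, mulVec, hp, hq, Finset.sum_add_distrib]
  have hnonneg (y : ι → ℝ) : 0 ≤ y ⬝ᵥ (A *ᵥ y) := hA.posSemidef.dotProduct_mulVec_nonneg y
  have hpos {y : ι → ℝ} (hy : y ≠ 0) : 0 < y ⬝ᵥ (A *ᵥ y) := hA.dotProduct_mulVec_pos hy
  have hpq : p ≠ 0 ∨ q ≠ 0 := by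
    by_contra! h
    exact hx (funext fun i => RCLike.ext (by simpa using congrFun h.1 i)
      (by simpa using congrFun h.2 i))
  rw [hre]
  rcases hpq with hp0 | hq0
  · exact add_pos_of_pos_of_nonneg (hpos hp0) (hnonneg q)
  · exact add_pos_of_nonneg_of_pos (hnonneg p) (hpos hq0)

theorem pos_of_posDef_mul_mulVec_eq_smul [Fintype ι] {P A : Matrix ι ι 𝕜} (hP : P.PosDef)
    (hA : A.PosDef) {x : ι → 𝕜} (hx : x ≠ 0) {μ : 𝕜} (hev : (P * A) *ᵥ x = μ • x) : 0 < μ := by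
  have hxA : 0 < star x ⬝ᵥ (A *ᵥ x) := hA.dotProduct_mulVec_pos hx
  have hAx : A *ᵥ x ≠ 0 := fun h => by simp [h] at hxA
  have hrayleigh : star (A *ᵥ x) ⬝ᵥ (P *ᵥ (A *ᵥ x)) = μ * (star x ⬝ᵥ (A *ᵥ x)) := by
    rw [mulVec_mulVec, hev, dotProduct_smul, smul_eq_mul, star_mulVec, hA.isHermitian.eq,
      ← dotProduct_mulVec]
  exact (mul_pos_iff_of_pos_right hxA).mp (hrayleigh ▸ hP.dotProduct_mulVec_pos hAx)

theorem exists_pos_ofReal_eq_of_posDef_mul_map_mulVec_eq_smul [Fintype ι]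
    {P A : Matrix ι ι ℝ} (hP : P.PosDef) (hA : A.PosDef) {x : ι → 𝕜} (hx : x ≠ 0) {μ : 𝕜}
    (hev : ((P * A).map (RCLike.ofReal : ℝ → 𝕜)) *ᵥ x = μ • x) :
    ∃ r : ℝ, 0 < r ∧ μ = (r : 𝕜) := by
  have hmap : (P * A).map (RCLike.ofReal : ℝ → 𝕜) = P.map RCLike.ofReal * A.map RCLike.ofReal :=
    Matrix.map_mul (f := algebraMap ℝ 𝕜)
  have hμ : 0 < μ :=
    pos_of_posDef_mul_mulVec_eq_smul (posDef_map_ofReal hP) (posDef_map_ofReal hA) hx (hmap ▸ hev)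
  obtain ⟨hre, him⟩ := RCLike.pos_iff.mp hμ
  exact ⟨RCLike.re μ, hre, RCLike.ext (by simp) (by simpa using him)⟩

end PositiveDefinite

section GeneralizedEigenvalue

variable {ι R : Type*} [Fintype ι]

theorem mulVec_eq_smul_of_preconditioned_mulVec_eq_smul [DecidableEq ι] [CommRing R]
    {A B M : Matrix ι ι R} (hB : IsUnit B) (hM : IsUnit M) {x : ι → R} {μ : R}
    (hev : (M⁻¹ * B * (M⁻¹)ᵀ * A) *ᵥ x = μ • x) :
    A *ᵥ x = μ • ((Mᵀ * B⁻¹ * M) *ᵥ x) := by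
  rw [isUnit_iff_isUnit_det] at hB hM
  have hinv : Mᵀ * B⁻¹ * M * (M⁻¹ * B * (M⁻¹)ᵀ) = 1 := by
    calc Mᵀ * B⁻¹ * M * (M⁻¹ * B * (M⁻¹)ᵀ)
        = Mᵀ * (B⁻¹ * (M * M⁻¹) * B) * (M⁻¹)ᵀ := by simp only [Matrix.mul_assoc]
      _ = (M⁻¹ * M)ᵀ := by
          rw [mul_nonsing_inv _ hM, Matrix.mul_one, nonsing_inv_mul _ hB, Matrix.mul_one,
            transpose_mul]
      _ = 1 := by rw [nonsing_inv_mul _ hM, transpose_one]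
  rw [← mulVec_smul, ← hev, mulVec_mulVec, ← Matrix.mul_assoc, hinv, Matrix.one_mul]

theorem div_le_and_le_div_of_mulVec_eq_smul {A S : Matrix ι ι ℝ} {x : ι → ℝ}
    {μ a₁ a₂ s₁ s₂ q : ℝ} (hev : A *ᵥ x = μ • (S *ᵥ x)) (ha₁ : 0 ≤ a₁) (hs₁ : 0 < s₁) (hq : 0 < q)
    (hA₁ : a₁ * q ≤ x ⬝ᵥ (A *ᵥ x)) (hA₂ : x ⬝ᵥ (A *ᵥ x) ≤ a₂ * q)
    (hS₁ : s₁ * q ≤ x ⬝ᵥ (S *ᵥ x)) (hS₂ : x ⬝ᵥ (S *ᵥ x) ≤ s₂ * q) :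
    a₁ / s₂ ≤ μ ∧ μ ≤ a₂ / s₁ := by
  rw [hev, dotProduct_smul, smul_eq_mul] at hA₁ hA₂
  set s := x ⬝ᵥ (S *ᵥ x)
  have hs : 0 < s := (mul_pos hs₁ hq).trans_le hS₁
  have hμ : 0 ≤ μ := nonneg_of_mul_nonneg_left ((mul_nonneg ha₁ hq.le).trans hA₁) hs
  have hs₂ : 0 < s₂ := pos_of_mul_pos_left (hs.trans_le hS₂) hq.le
  constructor
  · rw [div_le_iff₀ hs₂]
    refine le_of_mul_le_mul_right ?_ hq
    calc a₁ * q ≤ μ * s := hA₁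
      _ ≤ μ * (s₂ * q) := by gcongr
      _ = μ * s₂ * q := by ring
  · rw [le_div_iff₀ hs₁]
    refine le_of_mul_le_mul_right ?_ hq
    calc μ * s₁ * q = μ * (s₁ * q) := by ring
      _ ≤ μ * s := by gcongr
      _ ≤ a₂ * q := hA₂

end GeneralizedEigenvalue

section Galerkin

variable {R X Y ι κ : Type*} [CommRing R] [AddCommGroup X] [Module R X] [AddCommGroup Y]
  [Module R Y]

/-- The Galerkin matrix of a pairing `f` for trial vectors `φ` and test vectors `ψ`. Rows are
indexed by test vectors and columns by trial vectors, so its action on coefficient vectors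
discretizes `u ↦ f u ·`. -/
def galerkinMatrix (f : X →ₗ[R] Y →ₗ[R] R) (φ : ι → X) (ψ : κ → Y) : Matrix κ ι R :=
  of fun l k => f (φ k) (ψ l)

variable [Fintype ι] [Fintype κ]

theorem dotProduct_galerkinMatrix_mulVec (f : X →ₗ[R] Y →ₗ[R] R) (φ : ι → X) (ψ : κ → Y)
    (x : ι → R) (y : κ → R) :
    y ⬝ᵥ (galerkinMatrix f φ ψ *ᵥ x) =
      f (Fintype.linearCombination R φ x) (Fintype.linearCombination R ψ y) := by
  simp only [galerkinMatrix, dotProduct, mulVec, of_apply, Fintype.linearCombination_apply, map_sum,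
    map_smul, LinearMap.sum_apply, LinearMap.smul_apply, smul_eq_mul, mul_comm]

theorem linearCombination_ne_zero {φ : ι → X} (hφ : LinearIndependent R φ) {x : ι → R}
    (hx : x ≠ 0) : Fintype.linearCombination R φ x ≠ 0 :=
  (map_ne_zero_iff _ hφ.fintypeLinearCombination_injective).mpr hx

theorem linearCombination_mem_span (φ : ι → X) (x : ι → R) :
    Fintype.linearCombination R φ x ∈ Submodule.span R (Set.range φ) :=
  Fintype.range_linearCombination R φ ▸ LinearMap.mem_range_self _ x

theorem exists_mem_span_forall_apply_eq_and_dotProduct_eq [DecidableEq κ]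
    (b : Y →ₗ[R] Y →ₗ[R] R) (d : X →ₗ[R] Y →ₗ[R] R) (φ : ι → X) (ψ : κ → Y)
    (hB : IsUnit (galerkinMatrix b ψ ψ)) (x : ι → R) :
    ∃ w ∈ Submodule.span R (Set.range ψ),
      (∀ v ∈ Submodule.span R (Set.range ψ), b w v = d (Fintype.linearCombination R φ x) v) ∧
      x ⬝ᵥ (((galerkinMatrix d φ ψ)ᵀ * (galerkinMatrix b ψ ψ)⁻¹ * galerkinMatrix d φ ψ) *ᵥ x) =
        b w w := by
  set B := galerkinMatrix b ψ ψ
  set M := galerkinMatrix d φ ψ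
  set z := B⁻¹ *ᵥ (M *ᵥ x)
  have hBz : B *ᵥ z = M *ᵥ x := by
    rw [mulVec_mulVec, mul_nonsing_inv _ ((isUnit_iff_isUnit_det B).mp hB), one_mulVec]
  refine ⟨Fintype.linearCombination R ψ z, linearCombination_mem_span ψ z, fun v hv => ?_, ?_⟩
  · rw [← Fintype.range_linearCombination] at hv
    obtain ⟨y, rfl⟩ := hv
    rw [← dotProduct_galerkinMatrix_mulVec, ← dotProduct_galerkinMatrix_mulVec, hBz]
  · rw [← dotProduct_galerkinMatrix_mulVec, hBz, ← mulVec_mulVec, ← mulVec_mulVec,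
      dotProduct_mulVec, vecMul_transpose, dotProduct_comm]

theorem posDef_galerkinMatrix {E ι : Type*} [AddCommGroup E] [Module ℝ E]
    {a : E →ₗ[ℝ] E →ₗ[ℝ] ℝ} (hsymm : ∀ u v, a u v = a v u) (hpos : ∀ v, v ≠ 0 → 0 < a v v)
    {φ : ι → E} (hφ : LinearIndependent ℝ φ) : (galerkinMatrix a φ φ).PosDef := by
  refine ⟨IsHermitian.ext fun i j => hsymm _ _, fun x hx => ?_⟩
  have hform : (x.sum fun i xi => x.sum fun j xj => star xi * galerkinMatrix a φ φ i j * xj) =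
      a (Finsupp.linearCombination ℝ φ x) (Finsupp.linearCombination ℝ φ x) := by
    simp only [galerkinMatrix, of_apply, Finsupp.linearCombination_apply, Finsupp.sum, map_sum,
      map_smul, LinearMap.sum_apply, LinearMap.smul_apply, smul_eq_mul, star_trivial,
      Finset.mul_sum]
    exact Finset.sum_congr rfl fun i _ => Finset.sum_congr rfl fun j _ => by ring
  rw [hform]
  exact hpos _ ((map_ne_zero_iff _ hφ).mpr hx)

end Galerkin

section Forms

variable {X Y : Type*} [SeminormedAddCommGroup Y] [Module ℝ Y]

theorem apply_self_pos_of_elliptic [NormedAddCommGroup X] [Module ℝ X] {a : X →ₗ[ℝ] X →ₗ[ℝ] ℝ}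
    {c : ℝ} (hc : 0 < c) (hell : ∀ v, c * ‖v‖ ^ 2 ≤ a v v) (v : X) (hv : v ≠ 0) : 0 < a v v :=
  (mul_pos hc (pow_pos (norm_pos_iff.mpr hv) 2)).trans_le (hell v)

theorem apply_self_le_of_bounded {b : Y →ₗ[ℝ] Y →ₗ[ℝ] ℝ} {c : ℝ}
    (hbdd : ∀ u v, |b u v| ≤ c * ‖u‖ * ‖v‖) (v : Y) : b v v ≤ c * ‖v‖ ^ 2 :=
  calc b v v ≤ c * ‖v‖ * ‖v‖ := (le_abs_self _).trans (hbdd v v)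
    _ = c * ‖v‖ ^ 2 := by ring

theorem apply_le_sqrt_mul_norm {b : Y →ₗ[ℝ] Y →ₗ[ℝ] ℝ} {c : ℝ} (hsymm : ∀ u v, b u v = b v u)
    (hnonneg : ∀ v, 0 ≤ b v v) (hle : ∀ v, b v v ≤ c * ‖v‖ ^ 2) (w v : Y) :
    b w v ≤ √(c * b w w) * ‖v‖ := by
  have hcs : b w v ^ 2 ≤ b w w * b v v :=
    LinearMap.BilinForm.apply_sq_le_of_symm b hnonneg ⟨hsymm⟩ w v
  calc b w v ≤ √(c * b w w * ‖v‖ ^ 2) := Real.le_sqrt_of_sq_le <|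
        hcs.trans (by nlinarith [mul_le_mul_of_nonneg_left (hle v) (hnonneg w)])
    _ = √(c * b w w) * ‖v‖ := by rw [Real.sqrt_mul' _ (sq_nonneg _), Real.sqrt_sq (norm_nonneg v)]

theorem mul_apply_self_le_of_elliptic [SeminormedAddCommGroup X] [Module ℝ X]
    {b : Y →ₗ[ℝ] Y →ₗ[ℝ] ℝ} {d : X →ₗ[ℝ] Y →ₗ[ℝ] ℝ} {c₁ c₂ : ℝ} (hc₁ : 0 ≤ c₁) {u : X} {w : Y}
    (hell : c₁ * ‖w‖ ^ 2 ≤ b w w) (hbdd : |d u w| ≤ c₂ * ‖u‖ * ‖w‖) (hw : b w w = d u w) :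
    c₁ * b w w ≤ c₂ ^ 2 * ‖u‖ ^ 2 := by
  have henergy : b w w ≤ c₂ * ‖u‖ * ‖w‖ := hw ▸ (le_abs_self _).trans hbdd
  have hyoung : 2 * (c₂ * ‖u‖) * (c₁ * ‖w‖) ≤ (c₂ * ‖u‖) ^ 2 + (c₁ * ‖w‖) ^ 2 :=
    two_mul_le_add_sq _ _
  linarith [mul_le_mul_of_nonneg_left henergy hc₁, mul_le_mul_of_nonneg_left hell hc₁]

end Forms

section InfSup

variable {X Y ι κ : Type*} [SeminormedAddCommGroup Y] [Module ℝ Y]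

/-- The discrete inf-sup condition with constant `c` for the pairing `d` on `V × W`. The supremum is
taken in `ℝ`, where an empty or unbounded set has supremum `0`; so for `c > 0` the condition forces
the set to be nonempty and bounded above whenever `‖u‖ ≠ 0`. -/
def DiscreteInfSup [SeminormedAddCommGroup X] [Module ℝ X] (d : X →ₗ[ℝ] Y →ₗ[ℝ] ℝ)
    (V : Submodule ℝ X) (W : Submodule ℝ Y) (c : ℝ) : Prop :=
  ∀ u ∈ V, c * ‖u‖ ≤ sSup {r : ℝ | ∃ v ∈ W, v ≠ 0 ∧ r = d u v / ‖v‖}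

theorem DiscreteInfSup.mul_norm_le [SeminormedAddCommGroup X] [Module ℝ X]
    {d : X →ₗ[ℝ] Y →ₗ[ℝ] ℝ} {V : Submodule ℝ X} {W : Submodule ℝ Y} {c : ℝ}
    (h : DiscreteInfSup d V W c) {u : X} (hu : u ∈ V) {C : ℝ} (hC : 0 ≤ C)
    (hle : ∀ v ∈ W, d u v ≤ C * ‖v‖) : c * ‖u‖ ≤ C := by
  refine (h u hu).trans (Real.sSup_le ?_ hC)
  rintro r ⟨v, hv, -, rfl⟩
  exact div_le_of_le_mul₀ (norm_nonneg v) hC (hle v hv)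

theorem DiscreteInfSup.sq_mul_norm_sq_le [SeminormedAddCommGroup X] [Module ℝ X]
    {b : Y →ₗ[ℝ] Y →ₗ[ℝ] ℝ} {d : X →ₗ[ℝ] Y →ₗ[ℝ] ℝ} {V : Submodule ℝ X} {W : Submodule ℝ Y}
    {c C : ℝ} (h : DiscreteInfSup d V W c) (hc : 0 ≤ c) (hC : 0 ≤ C)
    (hsymm : ∀ v w, b v w = b w v) (hnonneg : ∀ v, 0 ≤ b v v) (hle : ∀ v, b v v ≤ C * ‖v‖ ^ 2)
    {u : X} (hu : u ∈ V) {w : Y} (hw : ∀ v ∈ W, b w v = d u v) :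
    c ^ 2 * ‖u‖ ^ 2 ≤ C * b w w := by
  have hsqrt : c * ‖u‖ ≤ √(C * b w w) := h.mul_norm_le hu (Real.sqrt_nonneg _) fun v hv =>
    hw v hv ▸ apply_le_sqrt_mul_norm hsymm hnonneg hle w v
  rw [← mul_pow]
  exact (Real.le_sqrt (by positivity) (mul_nonneg hC (hnonneg w))).mp hsqrt

theorem DiscreteInfSup.injective_galerkinMatrix_mulVec [Fintype ι] [Finite κ]
    [NormedAddCommGroup X] [Module ℝ X] {d : X →ₗ[ℝ] Y →ₗ[ℝ] ℝ} {φ : ι → X} {ψ : κ → Y} {c : ℝ}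
    (h : DiscreteInfSup d (.span ℝ (.range φ)) (.span ℝ (.range ψ)) c)
    (hc : 0 < c) (hφ : LinearIndependent ℝ φ) :
    Function.Injective (galerkinMatrix d φ ψ).mulVec := by
  cases nonempty_fintype κ
  refine (injective_iff_map_eq_zero (galerkinMatrix d φ ψ).mulVecLin).mpr fun x hx => ?_
  rw [mulVecLin_apply] at hx
  by_contra hx0
  have hu : 0 < ‖Fintype.linearCombination ℝ φ x‖ :=
    norm_pos_iff.mpr (linearCombination_ne_zero hφ hx0)
  have hle : c * ‖Fintype.linearCombination ℝ φ x‖ ≤ 0 := by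
    refine h.mul_norm_le (linearCombination_mem_span φ x) le_rfl fun v hv => ?_
    rw [← Fintype.range_linearCombination] at hv
    obtain ⟨y, rfl⟩ := hv
    rw [← dotProduct_galerkinMatrix_mulVec, hx, dotProduct_zero, zero_mul]
  exact hle.not_gt (mul_pos hc hu)

end InfSup

section Eigenvalues

variable {X Y ι κ : Type*} [Fintype ι] [Fintype κ] [DecidableEq κ] [SeminormedAddCommGroup Y]
  [Module ℝ Y]

theorem dotProduct_transpose_mul_inv_mul_mulVec_le [SeminormedAddCommGroup X] [Module ℝ X]
    {b : Y →ₗ[ℝ] Y →ₗ[ℝ] ℝ} {d : X →ₗ[ℝ] Y →ₗ[ℝ] ℝ} {φ : ι → X} {ψ : κ → Y} {c₁ c₂ : ℝ}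
    (hB : IsUnit (galerkinMatrix b ψ ψ)) (hc₁ : 0 < c₁) (hell : ∀ w, c₁ * ‖w‖ ^ 2 ≤ b w w)
    (hbdd : ∀ v w, |d v w| ≤ c₂ * ‖v‖ * ‖w‖) (x : ι → ℝ) :
    x ⬝ᵥ (((galerkinMatrix d φ ψ)ᵀ * (galerkinMatrix b ψ ψ)⁻¹ * galerkinMatrix d φ ψ) *ᵥ x) ≤
      c₂ ^ 2 / c₁ * ‖Fintype.linearCombination ℝ φ x‖ ^ 2 := by
  obtain ⟨w, hwψ, hw, henergy⟩ := exists_mem_span_forall_apply_eq_and_dotProduct_eq b d φ ψ hB x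
  rw [henergy, div_mul_eq_mul_div, le_div_iff₀' hc₁]
  exact mul_apply_self_le_of_elliptic hc₁.le (hell w) (hbdd _ w) (hw w hwψ)

theorem DiscreteInfSup.le_dotProduct_transpose_mul_inv_mul_mulVec [SeminormedAddCommGroup X]
    [Module ℝ X] {b : Y →ₗ[ℝ] Y →ₗ[ℝ] ℝ} {d : X →ₗ[ℝ] Y →ₗ[ℝ] ℝ} {φ : ι → X} {ψ : κ → Y}
    {c C : ℝ} (h : DiscreteInfSup d (.span ℝ (.range φ)) (.span ℝ (.range ψ)) c)
    (hB : IsUnit (galerkinMatrix b ψ ψ)) (hc : 0 ≤ c) (hC : 0 < C)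
    (hsymm : ∀ v w, b v w = b w v) (hnonneg : ∀ v, 0 ≤ b v v) (hle : ∀ v, b v v ≤ C * ‖v‖ ^ 2)
    (x : ι → ℝ) :
    c ^ 2 / C * ‖Fintype.linearCombination ℝ φ x‖ ^ 2 ≤
      x ⬝ᵥ (((galerkinMatrix d φ ψ)ᵀ * (galerkinMatrix b ψ ψ)⁻¹ * galerkinMatrix d φ ψ) *ᵥ x) := by
  obtain ⟨w, -, hw, henergy⟩ := exists_mem_span_forall_apply_eq_and_dotProduct_eq b d φ ψ hB x
  rw [henergy, div_mul_eq_mul_div, div_le_iff₀' hC]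
  exact h.sq_mul_norm_sq_le hc hC.le hsymm hnonneg hle (linearCombination_mem_span φ x) hw

theorem DiscreteInfSup.preconditioned_eigenvalue_bounds [DecidableEq ι] [NormedAddCommGroup X]
    [Module ℝ X] {a : X →ₗ[ℝ] X →ₗ[ℝ] ℝ} {b : Y →ₗ[ℝ] Y →ₗ[ℝ] ℝ} {d : X →ₗ[ℝ] Y →ₗ[ℝ] ℝ}
    {φ : ι → X} {ψ : ι → Y} {c₁A c₂A c₁B c₂B c₁M c₂M : ℝ}
    (h : DiscreteInfSup d (.span ℝ (.range φ)) (.span ℝ (.range ψ)) c₁M)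
    (hc₁A : 0 ≤ c₁A) (hc₁B : 0 < c₁B) (hc₂B : 0 < c₂B) (hc₁M : 0 < c₁M)
    (ha_ell : ∀ v, c₁A * ‖v‖ ^ 2 ≤ a v v) (ha_le : ∀ v, a v v ≤ c₂A * ‖v‖ ^ 2)
    (hb_symm : ∀ v w, b v w = b w v) (hb_ell : ∀ w, c₁B * ‖w‖ ^ 2 ≤ b w w)
    (hb_le : ∀ w, b w w ≤ c₂B * ‖w‖ ^ 2) (hd_bdd : ∀ v w, |d v w| ≤ c₂M * ‖v‖ * ‖w‖)
    (hφ : LinearIndependent ℝ φ) (hB : IsUnit (galerkinMatrix b ψ ψ))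
    {x : ι → ℝ} (hx : x ≠ 0) {μ : ℝ}
    (hev : ((galerkinMatrix d φ ψ)⁻¹ * galerkinMatrix b ψ ψ * ((galerkinMatrix d φ ψ)⁻¹)ᵀ *
      galerkinMatrix a φ φ) *ᵥ x = μ • x) :
    c₁A * c₁B / c₂M ^ 2 ≤ μ ∧ μ ≤ c₂A * c₂B / c₁M ^ 2 := by
  have hM : IsUnit (galerkinMatrix d φ ψ) :=
    mulVec_injective_iff_isUnit.mp (h.injective_galerkinMatrix_mulVec hc₁M hφ)
  have hu : 0 < ‖Fintype.linearCombination ℝ φ x‖ :=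
    norm_pos_iff.mpr (linearCombination_ne_zero hφ hx)
  have hb_nonneg (w : Y) : 0 ≤ b w w := le_trans (by positivity) (hb_ell w)
  have hA := dotProduct_galerkinMatrix_mulVec a φ φ x x
  rw [← div_div_eq_mul_div, ← div_div_eq_mul_div]
  exact div_le_and_le_div_of_mulVec_eq_smul
    (mulVec_eq_smul_of_preconditioned_mulVec_eq_smul hB hM hev) hc₁A (by positivity)
    (pow_pos hu 2) (hA ▸ ha_ell _) (hA ▸ ha_le _)
    (h.le_dotProduct_transpose_mul_inv_mul_mulVec hB hc₁M.le hc₂B hb_symm hb_nonneg hb_le x)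
    (dotProduct_transpose_mul_inv_mul_mulVec_le hB hc₁B hb_ell hd_bdd x)

end Eigenvalues

/-- Condition-number bound of the operator-preconditioning theorem: under the
hypotheses of the abstract preconditioning theorem, every real eigenvalue `λ`
of the preconditioned matrix `(M⁻¹BM⁻ᵀ)·A` satisfies
`c₁^A·c₁^B/(c₂^M)² ≤ λ ≤ c₂^A·c₂^B/(c₁^M)²` and `λ > 0`; all (complex)
eigenvalues are real and positive; and any ratio of two eigenvalues (in
particular `κ = λ_max/λ_min`) is bounded by
`(c₂^A·c₂^B·(c₂^M)²)/(c₁^A·c₁^B·(c₁^M)²)`. -/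
theorem operator_preconditioning_condition_number_bound
    (X Y : Type*) [NormedAddCommGroup X] [NormedSpace ℝ X]
    [NormedAddCommGroup Y] [NormedSpace ℝ Y]
    (a : X →ₗ[ℝ] X →ₗ[ℝ] ℝ) (b : Y →ₗ[ℝ] Y →ₗ[ℝ] ℝ) (d : X →ₗ[ℝ] Y →ₗ[ℝ] ℝ)
    (c₁A c₂A c₁B c₂B c₁M c₂M : ℝ)
    (hc₁A : 0 < c₁A) (hc₂A : 0 < c₂A) (hc₁B : 0 < c₁B) (hc₂B : 0 < c₂B)
    (hc₁M : 0 < c₁M) (hc₂M : 0 < c₂M)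
    (ha_symm : ∀ u v : X, a u v = a v u)
    (ha_ell : ∀ v : X, c₁A * ‖v‖ ^ 2 ≤ a v v)
    (ha_bdd : ∀ u v : X, |a u v| ≤ c₂A * ‖u‖ * ‖v‖)
    (hb_symm : ∀ u w : Y, b u w = b w u)
    (hb_ell : ∀ w : Y, c₁B * ‖w‖ ^ 2 ≤ b w w)
    (hb_bdd : ∀ u w : Y, |b u w| ≤ c₂B * ‖u‖ * ‖w‖)
    (hd_bdd : ∀ (v : X) (w : Y), |d v w| ≤ c₂M * ‖v‖ * ‖w‖)
    (N : ℕ) (φ : Fin N → X) (ψ : Fin N → Y)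
    (hφ : LinearIndependent ℝ φ) (hψ : LinearIndependent ℝ ψ)
    (hinfsup : ∀ τh ∈ Submodule.span ℝ (Set.range φ),
      c₁M * ‖τh‖ ≤ sSup {r : ℝ |
        ∃ vh ∈ Submodule.span ℝ (Set.range ψ), vh ≠ 0 ∧ r = d τh vh / ‖vh‖})
    (A B M : Matrix (Fin N) (Fin N) ℝ)
    (hA : ∀ ℓ k, A ℓ k = a (φ k) (φ ℓ))
    (hB : ∀ ℓ k, B ℓ k = b (ψ k) (ψ ℓ))
    (hM : ∀ ℓ k, M ℓ k = d (φ k) (ψ ℓ)) :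
    (∀ lam : ℝ, (∃ x : Fin N → ℝ, x ≠ 0 ∧ (M⁻¹ * B * (M⁻¹)ᵀ * A).mulVec x = lam • x) →
      c₁A * c₁B / c₂M ^ 2 ≤ lam ∧ lam ≤ c₂A * c₂B / c₁M ^ 2 ∧ 0 < lam) ∧
    (∀ μ : ℂ, (∃ x : Fin N → ℂ, x ≠ 0 ∧
        ((M⁻¹ * B * (M⁻¹)ᵀ * A).map (fun r : ℝ => (r : ℂ))).mulVec x = μ • x) →
      ∃ r : ℝ, 0 < r ∧ μ = (r : ℂ)) ∧
    (∀ lam₁ lam₂ : ℝ,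
      (∃ x : Fin N → ℝ, x ≠ 0 ∧ (M⁻¹ * B * (M⁻¹)ᵀ * A).mulVec x = lam₁ • x) →
      (∃ x : Fin N → ℝ, x ≠ 0 ∧ (M⁻¹ * B * (M⁻¹)ᵀ * A).mulVec x = lam₂ • x) →
      lam₁ / lam₂ ≤ (c₂A * c₂B * c₂M ^ 2) / (c₁A * c₁B * c₁M ^ 2)) := by
  obtain rfl : A = galerkinMatrix a φ φ := Matrix.ext hA
  obtain rfl : B = galerkinMatrix b ψ ψ := Matrix.ext hB
  obtain rfl : M = galerkinMatrix d φ ψ := Matrix.ext hM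
  replace hinfsup : DiscreteInfSup d (.span ℝ (.range φ)) (.span ℝ (.range ψ)) c₁M := hinfsup
  have hApos := posDef_galerkinMatrix ha_symm (apply_self_pos_of_elliptic hc₁A ha_ell) hφ
  have hBpos := posDef_galerkinMatrix hb_symm (apply_self_pos_of_elliptic hc₁B hb_ell) hψ
  have hMunit := mulVec_injective_iff_isUnit.mp (hinfsup.injective_galerkinMatrix_mulVec hc₁M hφ)
  have hbounds (lam : ℝ) (hlam : ∃ x : Fin N → ℝ, x ≠ 0 ∧ _ *ᵥ x = lam • x) :
      c₁A * c₁B / c₂M ^ 2 ≤ lam ∧ lam ≤ c₂A * c₂B / c₁M ^ 2 :=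
    let ⟨_, hx, hev⟩ := hlam
    hinfsup.preconditioned_eigenvalue_bounds hc₁A.le hc₁B hc₂B hc₁M ha_ell
      (apply_self_le_of_bounded ha_bdd) hb_symm hb_ell (apply_self_le_of_bounded hb_bdd) hd_bdd
      hφ hBpos.isUnit hx hev
  have hlower_pos : 0 < c₁A * c₁B / c₂M ^ 2 := by positivity
  refine ⟨fun lam hlam => ?_, fun μ ⟨x, hx, hev⟩ => ?_, fun lam₁ lam₂ h₁ h₂ => ?_⟩
  · exact ⟨(hbounds lam hlam).1, (hbounds lam hlam).2, hlower_pos.trans_le (hbounds lam hlam).1⟩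
  · exact exists_pos_ofReal_eq_of_posDef_mul_map_mulVec_eq_smul
      (posDef_mul_mul_transpose hBpos (isUnit_nonsing_inv_iff.mpr hMunit)) hApos hx hev
  · calc lam₁ / lam₂ ≤ (c₂A * c₂B / c₁M ^ 2) / (c₁A * c₁B / c₂M ^ 2) :=
          div_le_div₀ (by positivity) (hbounds lam₁ h₁).2 hlower_pos (hbounds lam₂ h₂).1
      _ = c₂A * c₂B * c₂M ^ 2 / (c₁A * c₁B * c₁M ^ 2) := by field_simp
end
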